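/- arXiv:1411.3463 — 3 statements merged into one kernel-verified Lean document; each statement's English description precedes it below -/
import Mathlib

section
/- Let V = (B^⊤B)^{−1} with entries V_{i,j}. Define g_i^{(r)} by: g_N^{(r)} = 0 for all r ≥ 1; g_i^{(1)} = F_i·V_{i+1,i+1} for i = 1,…,N−1; and g_i^{(r)} = F_i·g_{i+1}^{(r)} + B̌_{i+1}·g_i^{(r−1)} + Σ_{k=1}^{r−1} g_{i+1}^{(k)}·g_i^{(r−k)} for i = 1,…,N−1 and r ≥ 2. Then for every i = 1,…,N and every integer M ≥ 2, g_i^{(M)} = Σ_{j_1=i+1}^{N} ⋯ Σ_{j_{M−1}=i+1}^{N} V_{i,j_1}·V_{j_1,j_2}·⋯·V_{j_{M−2},j_{M−1}}·V_{j_{M−1},i}. -/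
open Matrix

/-!
Call `walkSum V s m a b` the total weight of the walks from `a` to `b` with `m` interior vertices,
all in `s`, and let `V = (Bᵀ * B)⁻¹`. Right of the diagonal, row `i` of `V` is a multiple of row
`i + 1`, and likewise for columns. Hence the closed walks at `i` through larger vertices weigh
`e i / q i` times the same walks based at `i + 1`, which may revisit `i + 1`. Splitting the latter
at their first return to `i + 1` gives a convolution recurrence. It is the recurrence defining `g`,
whose term `1 / q (i + 1) * g (r - 1) i` appears because `V i i = g 1 i + 1 / q i`.
-/

open Finset.HasAntidiagonal (antidiagonal)

section Sums

lemma sum_piFinset_fin_succ {α M : Type*} [AddCommMonoid M] {m : ℕ} (s : Fin (m + 1) → Finset α)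
    (f : (Fin (m + 1) → α) → M) :
    ∑ j ∈ Fintype.piFinset s, f j =
      ∑ x ∈ s 0, ∑ j ∈ Fintype.piFinset (Fin.tail s), f (Fin.cons x j) := by
  rw [← Finset.sum_product']
  refine Finset.sum_equiv (Fin.consEquiv fun _ ↦ α).symm (fun j ↦ ?_) fun j _ ↦ ?_
  · simpa [Fin.consEquiv] using Fin.mem_piFinset_iff_zero_tail
  · simp [Fin.consEquiv]

lemma sum_Icc_one_eq_sum_antidiagonal {M : Type*} [AddCommMonoid M] (f : ℕ → ℕ → M) (m : ℕ) :
    ∑ k ∈ Finset.Icc 1 (m + 1), f k (m + 2 - k) =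
      ∑ p ∈ antidiagonal m, f (p.1 + 1) (p.2 + 1) := by
  refine Finset.sum_nbij' (fun k ↦ (k - 1, m + 1 - k)) (fun p ↦ p.1 + 1) ?_ ?_ ?_ ?_ ?_ <;>
    grind [Finset.HasAntidiagonal.mem_antidiagonal]

lemma sum_antidiagonal_add_ite_mul {R : Type*} [NonUnitalNonAssocSemiring R] (c : R)
    (a x : ℕ → R) (m : ℕ) :
    ∑ p ∈ antidiagonal m, (a p.1 + if p.1 = 0 then c else 0) * x p.2 =
      c * x m + ∑ p ∈ antidiagonal m, a p.1 * x p.2 := by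
  have head : ∑ p ∈ antidiagonal m, (if p.1 = 0 then c else 0) * x p.2 = c * x m := by
    rw [Finset.sum_eq_single (0, m)] <;> aesop
  simp only [add_mul, Finset.sum_add_distrib, head, add_comm]

lemma eq_of_convolution_recurrence {R : Type*} [Semiring R] {a f x y : ℕ → R} (h0 : x 0 = y 0)
    (hx : ∀ m, x (m + 1) = f m + ∑ p ∈ antidiagonal m, a p.1 * x p.2)
    (hy : ∀ m, y (m + 1) = f m + ∑ p ∈ antidiagonal m, a p.1 * y p.2) : x = y := by
  ext m
  induction m using Nat.strong_induction_on with
  | _ m ih =>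
    cases m with
    | zero => exact h0
    | succ m =>
      rw [hx, hy]
      congr 1
      exact Finset.sum_congr rfl fun p hp ↦ by
        rw [ih p.2 (Nat.lt_succ_of_le (Finset.HasAntidiagonal.antidiagonal.snd_le hp))]

end Sums

section WalkSum

variable {ι R : Type*} [Fintype ι] [DecidableEq ι]

section Semiring

variable [Semiring R]

/-- The matrix of total weights of walks with exactly `m` interior vertices, all of them in `s`:
a walk `a, j₁, …, jₘ, b` has weight `V a j₁ * V j₁ j₂ * ⋯ * V jₘ b`. -/
def walkSum (V : Matrix ι ι R) (s : Finset ι) (m : ℕ) : Matrix ι ι R :=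
  V * (diagonal (fun x ↦ if x ∈ s then 1 else 0) * V) ^ m

variable (V : Matrix ι ι R) (s : Finset ι)

@[simp]
lemma walkSum_zero : walkSum V s 0 = V := by
  rw [walkSum, pow_zero, mul_one]

lemma walkSum_succ_apply (m : ℕ) (a b : ι) :
    walkSum V s (m + 1) a b = ∑ x ∈ s, V a x * walkSum V s m x b := by
  rw [walkSum, pow_succ', Matrix.mul_assoc (diagonal _), ← walkSum, mul_apply]
  simp [diagonal_mul]

lemma walkSum_succ_apply' (m : ℕ) (a b : ι) :
    walkSum V s (m + 1) a b = ∑ x ∈ s, walkSum V s m a x * V x b := by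
  rw [walkSum, pow_succ, ← Matrix.mul_assoc, ← walkSum, mul_apply]
  simp [diagonal_mul]

variable {V s}

lemma walkSum_succ_apply_eq_mul_left {i i' : ι} {α : R} (h : ∀ x ∈ s, V i x = α * V i' x)
    (m : ℕ) (b : ι) : walkSum V s (m + 1) i b = α * walkSum V s (m + 1) i' b := by
  simp only [walkSum_succ_apply, Finset.mul_sum, ← mul_assoc]
  exact Finset.sum_congr rfl fun x hx ↦ by rw [h x hx]

lemma walkSum_succ_apply_eq_mul_right {i i' : ι} {β : R} (h : ∀ x ∈ s, V x i = V x i' * β)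
    (m : ℕ) (a : ι) : walkSum V s (m + 1) a i = walkSum V s (m + 1) a i' * β := by
  simp only [walkSum_succ_apply', Finset.sum_mul, mul_assoc]
  exact Finset.sum_congr rfl fun x hx ↦ by rw [h x hx]

-- The convolution splits a walk at its first visit to `i`.
lemma walkSum_insert_succ_apply {i : ι} (hi : i ∉ s) (m : ℕ) (a b : ι) :
    walkSum V (insert i s) (m + 1) a b = walkSum V s (m + 1) a b +
      ∑ p ∈ antidiagonal m, walkSum V s p.1 a i * walkSum V (insert i s) p.2 i b := by
  induction m generalizing a with
  | zero => simp [walkSum_succ_apply, Finset.sum_insert hi, add_comm]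
  | succ m ih =>
    have shift : ∑ p ∈ antidiagonal m,
          walkSum V s (p.1 + 1) a i * walkSum V (insert i s) p.2 i b =
        ∑ x ∈ s, V a x * ∑ p ∈ antidiagonal m,
          walkSum V s p.1 x i * walkSum V (insert i s) p.2 i b := by
      simp only [walkSum_succ_apply V s, Finset.sum_mul, Finset.mul_sum, mul_assoc]
      exact Finset.sum_comm
    rw [walkSum_succ_apply, Finset.sum_insert hi, Finset.Nat.sum_antidiagonal_succ, shift,
      walkSum_zero, walkSum_succ_apply V s]
    simp only [ih, mul_add, Finset.sum_add_distrib]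
    abel

end Semiring

lemma eq_mul_walkSum_Ici_of_recurrence [CommSemiring R] [LinearOrder ι] [LocallyFiniteOrderTop ι]
    {V : Matrix ι ι R} {i : ι} {α β : R} {x y : ℕ → R}
    (hy : ∀ m, walkSum V (Finset.Ioi i) m i i = y (m + 1) + if m = 0 then β else 0)
    (hx1 : x 1 = α * V i i)
    (hx : ∀ r, 2 ≤ r → x r = α * y r + β * x (r - 1) +
      ∑ k ∈ Finset.Icc 1 (r - 1), y k * x (r - k)) (m : ℕ) :
    x (m + 1) = α * walkSum V (Finset.Ici i) m i i := by
  refine congrFun (eq_of_convolution_recurrence (a := fun m ↦ walkSum V (Finset.Ioi i) m i i)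
    (f := fun m ↦ α * y (m + 2)) (x := fun m ↦ x (m + 1))
    (y := fun m ↦ α * walkSum V (Finset.Ici i) m i i) ?_ (fun m ↦ ?_) fun m ↦ ?_) m
  · rw [walkSum_zero, hx1]
  · simp only [hy]
    rw [sum_antidiagonal_add_ite_mul β (fun k ↦ y (k + 1)) fun k ↦ x (k + 1),
      hx (m + 2) (Nat.le_add_left 2 m), add_assoc]
    exact congrArg (fun S ↦ α * y (m + 2) + (β * x (m + 1) + S))
      (sum_Icc_one_eq_sum_antidiagonal (fun k l ↦ y k * x l) m)
  · rw [← Finset.Ioi_insert, walkSum_insert_succ_apply (by simp), hy (m + 1),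
      if_neg m.succ_ne_zero, add_zero, mul_add, Finset.mul_sum]
    simp only [mul_left_comm α]

lemma walkSum_apply_eq_sum_piFinset [CommSemiring R] (V : Matrix ι ι R) (s : Finset ι)
    (m : ℕ) (a b : ι) :
    walkSum V s m a b = ∑ j ∈ Fintype.piFinset fun _ : Fin m ↦ s,
      ∏ k, V (Fin.cons (α := fun _ ↦ ι) a j k) (Fin.snoc (α := fun _ ↦ ι) j b k) := by
  induction m generalizing a with
  | zero => simp [Fin.snoc]
  | succ m ih =>
    rw [walkSum_succ_apply, sum_piFinset_fin_succ]
    simp only [ih, Finset.mul_sum, Fin.prod_univ_succ (n := m + 1), ← Fin.cons_snoc_eq_snoc_cons,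
      Fin.cons_zero, Fin.cons_succ]
    rfl

lemma walkSum_apply_self [CommSemiring R] (V : Matrix ι ι R) (s : Finset ι) (m : ℕ) (i : ι) :
    walkSum V s m i i = ∑ j ∈ Fintype.piFinset fun _ : Fin m ↦ s,
      (fun c : ℕ → ι ↦ ∏ k ∈ Finset.range (m + 1), V (c k) (c (k + 1)))
        (fun t ↦ if h : 1 ≤ t ∧ t ≤ m then j ⟨t - 1, Nat.sub_one_lt_of_le h.1 h.2⟩ else i) := by
  rw [walkSum_apply_eq_sum_piFinset]
  refine Finset.sum_congr rfl fun j _ ↦ ?_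
  beta_reduce
  rw [Finset.prod_range]
  refine Finset.prod_congr rfl fun k _ ↦ ?_
  congr 1
  · cases k using Fin.cases with
    | zero => simp
    | succ k => simp
  · cases k using Fin.lastCases with
    | last => simp
    | cast k => simp

end WalkSum

section Bidiagonal

variable {K : Type*} {N : ℕ}

/-- The `N × N` upper bidiagonal matrix with diagonal `d 0, …, d (N - 1)` and superdiagonal
`u 0, …, u (N - 2)`; further values of `d` and `u` are ignored. -/
def upperBidiagonal [Zero K] (N : ℕ) (d u : ℕ → K) : Matrix (Fin N) (Fin N) K :=
  of fun i j ↦ if (j : ℕ) = i then d i else if (j : ℕ) = i + 1 then u i else 0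

lemma upperBidiagonal_blockTriangular [Zero K] (d u : ℕ → K) :
    (upperBidiagonal N d u).BlockTriangular id := by
  intro i j (hij : j < i)
  rw [upperBidiagonal, of_apply, if_neg (by omega), if_neg (by omega)]

lemma upperBidiagonal_mul_apply [NonUnitalNonAssocSemiring K] (d u : ℕ → K)
    (V : Matrix (Fin N) (Fin N) K) (i j : Fin N) :
    (upperBidiagonal N d u * V) i j =
      d i * V i j + if h : (i : ℕ) + 1 < N then u i * V ⟨i + 1, h⟩ j else 0 := by
  have row_entry (k : Fin N) : upperBidiagonal N d u i k * V k j =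
      (if k = i then d i * V k j else 0) + if (k : ℕ) = i + 1 then u i * V k j else 0 := by
    simp only [upperBidiagonal, of_apply, Fin.ext_iff]
    split_ifs <;> first | omega | simp
  simp only [mul_apply, row_entry, Finset.sum_add_distrib, Finset.sum_ite_eq', Finset.mem_univ,
    if_true]
  congr 1
  split_ifs with h
  · simpa [Fin.ext_iff] using
      Finset.sum_ite_eq' Finset.univ (⟨i + 1, h⟩ : Fin N) fun k ↦ u i * V k j
  · exact Finset.sum_eq_zero fun k _ ↦ if_neg (by omega)

/-- The tridiagonal matrix whose lower and upper triangular factors are the bidiagonal matrices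
with entries `d', u'` and `d, u`; the paper's `Bᵀ * B` is the case of equal factors. -/
def tridiagonalLU [NonUnitalNonAssocSemiring K] (N : ℕ) (d u d' u' : ℕ → K) :
    Matrix (Fin N) (Fin N) K :=
  (upperBidiagonal N d' u')ᵀ * upperBidiagonal N d u

lemma transpose_tridiagonalLU [NonUnitalCommSemiring K] (N : ℕ) (d u d' u' : ℕ → K) :
    (tridiagonalLU N d u d' u')ᵀ = tridiagonalLU N d' u' d u := by
  rw [tridiagonalLU, tridiagonalLU, transpose_mul, transpose_transpose]

variable [Field K] {d u d' u' : ℕ → K}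

lemma isUnit_det_upperBidiagonal (hd : ∀ i < N, d i ≠ 0) :
    IsUnit (upperBidiagonal N d u).det := by
  rw [det_of_isUpperTriangular (upperBidiagonal_blockTriangular d u), isUnit_iff_ne_zero]
  exact Finset.prod_ne_zero_iff.2 fun i _ ↦ by simpa [upperBidiagonal] using hd i i.2

lemma upperBidiagonal_inv_blockTriangular (hd : ∀ i < N, d i ≠ 0) :
    (upperBidiagonal N d u)⁻¹.BlockTriangular id := by
  have := invertibleOfIsUnitDet _ (isUnit_det_upperBidiagonal (u := u) hd)
  exact blockTriangular_inv_of_blockTriangular (upperBidiagonal_blockTriangular d u)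

lemma upperBidiagonal_inv_apply_self (hd : ∀ i < N, d i ≠ 0) (i : Fin N) :
    (upperBidiagonal N d u)⁻¹ i i = (d i)⁻¹ := by
  have diag_entry := upperBidiagonal_mul_apply d u (upperBidiagonal N d u)⁻¹ i i
  have below (h : (i : ℕ) + 1 < N) : (upperBidiagonal N d u)⁻¹ ⟨i + 1, h⟩ i = 0 :=
    upperBidiagonal_inv_blockTriangular hd (Nat.lt_succ_self i)
  simp only [mul_nonsing_inv _ (isUnit_det_upperBidiagonal hd), one_apply_eq, below, mul_zero,
    dite_eq_ite, ite_self, add_zero] at diag_entry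
  exact eq_inv_of_mul_eq_one_right diag_entry.symm

lemma upperBidiagonal_mul_tridiagonalLU_inv (hd : ∀ i < N, d i ≠ 0) :
    upperBidiagonal N d u * (tridiagonalLU N d u d' u')⁻¹ = (upperBidiagonal N d' u')⁻¹ᵀ := by
  rw [tridiagonalLU, Matrix.mul_inv_rev, ← transpose_nonsing_inv,
    mul_nonsing_inv_cancel_left _ _ (isUnit_det_upperBidiagonal hd)]

lemma tridiagonalLU_inv_apply_of_lt (hd : ∀ i < N, d i ≠ 0) (hd' : ∀ i < N, d' i ≠ 0)
    {i j : Fin N} (h : (i : ℕ) + 1 < N) (hij : i < j) :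
    (tridiagonalLU N d u d' u')⁻¹ i j =
      -(u i / d i) * (tridiagonalLU N d u d' u')⁻¹ ⟨i + 1, h⟩ j := by
  have row := upperBidiagonal_mul_apply d u (tridiagonalLU N d u d' u')⁻¹ i j
  rw [upperBidiagonal_mul_tridiagonalLU_inv hd, transpose_apply,
    upperBidiagonal_inv_blockTriangular hd' hij, dif_pos h] at row
  have := hd i i.2
  field_simp
  linear_combination -row

lemma tridiagonalLU_inv_apply_of_gt (hd : ∀ i < N, d i ≠ 0) (hd' : ∀ i < N, d' i ≠ 0)
    {i j : Fin N} (h : (i : ℕ) + 1 < N) (hij : i < j) :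
    (tridiagonalLU N d u d' u')⁻¹ j i =
      (tridiagonalLU N d u d' u')⁻¹ j ⟨i + 1, h⟩ * -(u' i / d' i) := by
  have := tridiagonalLU_inv_apply_of_lt (u := u') (u' := u) hd' hd h hij
  rwa [← transpose_tridiagonalLU, ← transpose_nonsing_inv, transpose_apply, transpose_apply,
    mul_comm] at this

lemma tridiagonalLU_inv_apply_self (hd : ∀ i < N, d i ≠ 0) (hd' : ∀ i < N, d' i ≠ 0)
    (i : Fin N) :
    (tridiagonalLU N d u d' u')⁻¹ i i = 1 / (d i * d' i) +
      if h : (i : ℕ) + 1 < N then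
        u i * u' i / (d i * d' i) * (tridiagonalLU N d u d' u')⁻¹ ⟨i + 1, h⟩ ⟨i + 1, h⟩
      else 0 := by
  have row := upperBidiagonal_mul_apply d u (tridiagonalLU N d u d' u')⁻¹ i i
  rw [upperBidiagonal_mul_tridiagonalLU_inv hd, transpose_apply,
    upperBidiagonal_inv_apply_self hd'] at row
  have hdi := hd i i.2
  have hdi' := hd' i i.2
  split_ifs at row ⊢ with h
  · have i_lt : i < ⟨i + 1, h⟩ := Nat.lt_succ_self i
    rw [tridiagonalLU_inv_apply_of_gt hd hd' h i_lt] at row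
    field_simp at row ⊢
    linear_combination -row
  · field_simp at row ⊢
    linear_combination -row

lemma walkSum_tridiagonalLU_inv_Ioi (hd : ∀ i < N, d i ≠ 0) (hd' : ∀ i < N, d' i ≠ 0)
    (i : Fin N) (h : (i : ℕ) + 1 < N) (m : ℕ) :
    walkSum (tridiagonalLU N d u d' u')⁻¹ (Finset.Ioi i) (m + 1) i i =
      u i * u' i / (d i * d' i) *
        walkSum (tridiagonalLU N d u d' u')⁻¹ (Finset.Ici ⟨i + 1, h⟩) (m + 1)
          ⟨i + 1, h⟩ ⟨i + 1, h⟩ := by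
  have Ioi_eq : Finset.Ioi i = Finset.Ici ⟨i + 1, h⟩ := by
    ext x
    rw [Finset.mem_Ioi, Finset.mem_Ici, Fin.lt_def, Fin.le_def, Nat.succ_le_iff]
  rw [walkSum_succ_apply_eq_mul_left fun j hj ↦
      tridiagonalLU_inv_apply_of_lt hd hd' h (Finset.mem_Ioi.1 hj),
    walkSum_succ_apply_eq_mul_right fun j hj ↦
      tridiagonalLU_inv_apply_of_gt hd hd' h (Finset.mem_Ioi.1 hj), Ioi_eq]
  ring

lemma walkSum_Ioi_eq_of_recurrence {q e : ℕ → K} (hq0 : ∀ i < N, q i ≠ 0)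
    (hq : ∀ i < N, d i * d' i = q i) (he : ∀ i, i + 1 < N → u i * u' i = e i)
    {V : Matrix (Fin N) (Fin N) K} (hV : V = (tridiagonalLU N d u d' u')⁻¹)
    {g : ℕ → ℕ → K} (hgN : ∀ r, 1 ≤ r → g r (N - 1) = 0)
    (hg1 : ∀ i (h : i + 1 < N), g 1 i = e i / q i * V ⟨i + 1, h⟩ ⟨i + 1, h⟩)
    (hgr : ∀ r, 2 ≤ r → ∀ i, i + 1 < N →
      g r i = e i / q i * g r (i + 1) + 1 / q (i + 1) * g (r - 1) i +
        ∑ k ∈ Finset.Icc 1 (r - 1), g k (i + 1) * g (r - k) i) (i : Fin N) (m : ℕ) :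
    walkSum V (Finset.Ioi i) m i i = g (m + 1) i + if m = 0 then 1 / q i else 0 := by
  have hd (i : ℕ) (hi : i < N) : d i ≠ 0 := left_ne_zero_of_mul (hq i hi ▸ hq0 i hi)
  have hd' (i : ℕ) (hi : i < N) : d' i ≠ 0 := right_ne_zero_of_mul (hq i hi ▸ hq0 i hi)
  have diag := tridiagonalLU_inv_apply_self (u := u) (u' := u') hd hd'
  rw [← hV] at diag
  induction i using WellFoundedGT.induction generalizing m with
  | _ i ih =>
    by_cases h : (i : ℕ) + 1 < N
    · have g_eq := eq_mul_walkSum_Ici_of_recurrence (ih ⟨i + 1, h⟩ (Nat.lt_succ_self i))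
        (hg1 i h) fun r hr ↦ hgr r hr i h
      cases m with
      | zero => rw [walkSum_zero, diag, dif_pos h, hq i i.2, he i h, hg1 i h, if_pos rfl, add_comm]
      | succ m =>
        rw [g_eq, if_neg m.succ_ne_zero, add_zero, hV, walkSum_tridiagonalLU_inv_Ioi hd hd' i h,
          hq i i.2, he i h]
    · have g_eq : g (m + 1) i = 0 := by
        rw [show (i : ℕ) = N - 1 by omega, hgN _ m.succ_pos]
      have Ioi_eq : Finset.Ioi i = ∅ := Finset.Ioi_eq_empty.2 fun j _ ↦ by
        rw [Fin.le_def]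
        omega
      cases m with
      | zero => rw [walkSum_zero, diag, dif_neg h, hq i i.2, g_eq, if_pos rfl, add_comm]
      | succ m =>
        rw [walkSum_succ_apply, Ioi_eq, Finset.sum_empty, g_eq, if_neg m.succ_ne_zero, add_zero]

end Bidiagonal

theorem stmt_9_general {K : Type*} [Field K] (N : ℕ) (d u d' u' q e : ℕ → K)
    (hq0 : ∀ i < N, q i ≠ 0) (hq : ∀ i < N, d i * d' i = q i)
    (he : ∀ i, i + 1 < N → u i * u' i = e i)
    (V : Matrix (Fin N) (Fin N) K) (hV : V = (tridiagonalLU N d u d' u')⁻¹)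
    (g : ℕ → ℕ → K) (hgN : ∀ r, 1 ≤ r → g r (N - 1) = 0)
    (hg1 : ∀ i (h : i + 1 < N), g 1 i = e i / q i * V ⟨i + 1, h⟩ ⟨i + 1, h⟩)
    (hgr : ∀ r, 2 ≤ r → ∀ i, i + 1 < N →
      g r i = e i / q i * g r (i + 1) + 1 / q (i + 1) * g (r - 1) i +
        ∑ k ∈ Finset.Icc 1 (r - 1), g k (i + 1) * g (r - k) i)
    (i : ℕ) (hi : i < N) (M : ℕ) (hM : 2 ≤ M) :
    g M i =
      ∑ j ∈ Finset.univ.filter (fun j : Fin (M - 1) → Fin N ↦ ∀ k, i < (j k : ℕ)),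
        (fun c : ℕ → Fin N ↦ ∏ k ∈ Finset.range M, V (c k) (c (k + 1)))
          (fun t ↦ if h : 1 ≤ t ∧ t ≤ M - 1 then
            j ⟨t - 1, Nat.sub_one_lt_of_le h.1 h.2⟩ else ⟨i, hi⟩) := by
  obtain ⟨m, rfl⟩ := Nat.exists_eq_add_of_le' hM
  have paths : (Fintype.piFinset fun _ : Fin (m + 1) ↦ Finset.Ioi (⟨i, hi⟩ : Fin N)) =
      Finset.univ.filter (fun j ↦ ∀ k, i < (j k : ℕ)) := by
    ext j
    simp [Fin.lt_def]
  have g_eq := walkSum_Ioi_eq_of_recurrence hq0 hq he hV hgN hg1 hgr ⟨i, hi⟩ (m + 1)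
  rw [if_neg m.succ_ne_zero, add_zero] at g_eq
  rw [← g_eq, walkSum_apply_self, paths]
  rfl

/-- matrix-theoretic interpretation of the quantities `g_i^{(M)}`:
`g_i^{(M)} = Σ_{j_1>i} ⋯ Σ_{j_{M-1}>i} V_{i,j_1} V_{j_1,j_2} ⋯ V_{j_{M-1},i}`,
where `V = (BᵀB)⁻¹`. Indices are 0-based: the paper's 1-based `g_i^{(r)}` is
`g r (i-1)`; `B̌_i = 1/q_i` is `1 / q (i-1)`; `F_i = e_i/q_i` is `e (i-1) / q (i-1)`;
the paper's range `i+1 ≤ j_k ≤ N` becomes `i < (j k : ℕ)`. The chain product is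
encoded via the sequence `c` with `c 0 = c M = i` and `c t = j_t` for `1 ≤ t ≤ M-1`. -/
theorem stmt_9 (N : ℕ) (hN : 0 < N) (q e : ℕ → ℝ)
    (hq : ∀ i, i < N → 0 < q i) (he : ∀ i, i + 1 < N → 0 < e i)
    (B : Matrix (Fin N) (Fin N) ℝ)
    (hB : ∀ i j : Fin N, B i j =
      if (j : ℕ) = (i : ℕ) then Real.sqrt (q i)
      else if (j : ℕ) = (i : ℕ) + 1 then Real.sqrt (e i) else 0)
    (V : Matrix (Fin N) (Fin N) ℝ) (hV : V = (Bᵀ * B)⁻¹)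
    (g : ℕ → ℕ → ℝ)
    (hgN : ∀ r, 1 ≤ r → g r (N - 1) = 0)
    (hg1 : ∀ i (h1 : i + 1 < N),
      g 1 i = e i / q i * V ⟨i + 1, by omega⟩ ⟨i + 1, by omega⟩)
    (hgr : ∀ r, 2 ≤ r → ∀ i, i + 1 < N →
      g r i = e i / q i * g r (i + 1) + 1 / q (i + 1) * g (r - 1) i
        + ∑ k ∈ Finset.Icc 1 (r - 1), g k (i + 1) * g (r - k) i) :
    ∀ i (hi : i < N), ∀ M, 2 ≤ M →
      g M i =
        ∑ j ∈ Finset.univ.filter (fun j : Fin (M - 1) → Fin N => ∀ k, i < (j k : ℕ)),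
          (fun c : ℕ → Fin N => ∏ k ∈ Finset.range M, V (c k) (c (k + 1)))
            (fun t => if h : 1 ≤ t ∧ t ≤ M - 1 then j ⟨t - 1, by omega⟩ else ⟨i, hi⟩) := by
  refine stmt_9_general N (fun i ↦ √(q i)) (fun i ↦ √(e i)) (fun i ↦ √(q i)) (fun i ↦ √(e i)) q e
    (fun i hi ↦ (hq i hi).ne') (fun i hi ↦ Real.mul_self_sqrt (hq i hi).le)
    (fun i hi ↦ Real.mul_self_sqrt (he i hi).le) V ?_ g hgN hg1 hgr
  have B_eq : B = upperBidiagonal N (fun i ↦ √(q i)) (fun i ↦ √(e i)) := Matrix.ext hB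
  rw [hV, B_eq, tridiagonalLU]
end

section
/- Define g_i^{(1)} and G_i^{(1)} by: g_N^{(1)} = 0, G_N^{(1)} = B̌_N, g_i^{(1)} = F_i·G_{i+1}^{(1)} and G_i^{(1)} = g_i^{(1)} + B̌_i for i = 1,…,N−1. For M ≥ 2 define g_i^{(M)} by g_N^{(M)} = 0 and g_i^{(M)} = F_i·g_{i+1}^{(M)} + G_{i+1}^{(1)}·g_i^{(M−1)} + Σ_{k=2}^{M−1} g_{i+1}^{(k)}·g_i^{(M−k)} for i = 1,…,N−1, and define G_i^{(M)} = M·g_i^{(M)} + G_i^{(1)}·G_i^{(M−1)} + Σ_{k=2}^{M−1} g_i^{(k)}·G_i^{(M−k)} for i = 1,…,N. Then for every positive integer M, J_M(B) = Σ_{i=1}^{N} G_i^{(M)}. -/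
open Matrix

/-
For any square matrix `A`, the logarithmic derivative `X f' / f` of `f = det (1 - X A)` is
`-∑ Tr (A ^ M) X ^ M`. Take `A = (L U)⁻¹` with `U` upper and `L` lower bidiagonal. Up to the
factor `det U * det L`, `f` is the determinant of the tridiagonal matrix `U L - X`, and eliminating
this matrix from its last row upwards gives `f = ∏ (1 - hᵢ)`, where the `hᵢ` are power series
without constant term obeying a continued fraction recurrence. Coefficientwise, this recurrence is
the one for `g`, with `hᵢ = pᵢ X + ∑ g M i X ^ M`, and the recurrence for `G` says that
`∑ G M i X ^ M` is `X hᵢ' / (1 - hᵢ)`. Summing over `i` gives the trace formula, over any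
commutative ring.
-/

section

open PowerSeries

section Derivation

lemma derivation_prod {R A V : Type*} [CommSemiring R] [CommSemiring A] [AddCommMonoid V]
    [Algebra R A] [Module A V] [Module R V] (D : Derivation R A V)
    {ι : Type*} [DecidableEq ι] (s : Finset ι) (f : ι → A) :
    D (∏ i ∈ s, f i) = ∑ i ∈ s, (∏ j ∈ s.erase i, f j) • D (f i) := by
  induction s using Finset.induction_on with
  | empty => simp
  | insert a s ha ih =>
    have herase : ∀ i ∈ s, ∏ j ∈ (insert a s).erase i, f j = f a * ∏ j ∈ s.erase i, f j := by
      intro i hi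
      rw [Finset.erase_insert_of_ne (ne_of_mem_of_not_mem hi ha).symm,
        Finset.prod_insert fun h => ha (Finset.mem_of_mem_erase h)]
    calc D (∏ i ∈ insert a s, f i)
        = (∏ j ∈ s, f j) • D (f a) + ∑ i ∈ s, (f a * ∏ j ∈ s.erase i, f j) • D (f i) := by
          simp only [Finset.prod_insert ha, D.leibniz, ih, Finset.smul_sum, mul_smul, add_comm]
      _ = ∑ i ∈ insert a s, (∏ j ∈ (insert a s).erase i, f j) • D (f i) := by
          rw [Finset.sum_insert ha, Finset.erase_insert ha]
          exact congrArg _ (Finset.sum_congr rfl fun i hi => by rw [herase i hi])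

lemma derivation_prod_of_forall_eq_mul {R A : Type*} [CommSemiring R] [CommSemiring A]
    [Algebra R A] (D : Derivation R A A) {ι : Type*} (s : Finset ι) (f φ : ι → A)
    (h : ∀ i ∈ s, D (f i) = φ i * f i) :
    D (∏ i ∈ s, f i) = (∑ i ∈ s, φ i) * ∏ i ∈ s, f i := by
  classical
  rw [derivation_prod, Finset.sum_mul]
  refine Finset.sum_congr rfl fun i hi => ?_
  rw [h i hi, smul_eq_mul, mul_left_comm, Finset.prod_erase_mul s f hi]

lemma derivation_det {R A n : Type*} [CommRing R] [CommRing A] [Algebra R A]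
    (D : Derivation R A A) [Fintype n] [DecidableEq n] (M : Matrix n n A) :
    D M.det = (M.adjugate * M.map D).trace := by
  have hcol : ∀ i, (M.adjugate * M.map D) i i = (M.updateCol i fun k => D (M k i)).det := by
    intro i
    rw [← cramer_apply, cramer_eq_adjugate_mulVec]
    rfl
  simp only [trace, diag_apply, hcol, det_apply, map_sum, Units.smul_def, D.map_smul_of_tower,
    derivation_prod, Finset.smul_sum]
  rw [Finset.sum_comm]
  refine Finset.sum_congr rfl fun i _ => Finset.sum_congr rfl fun σ _ => ?_
  rw [← Finset.prod_erase_mul _ _ (Finset.mem_univ i), updateCol_self, smul_eq_mul]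
  congr 2
  refine Finset.prod_congr rfl fun j hj => ?_
  rw [updateCol_ne (Finset.ne_of_mem_erase hj)]

end Derivation

section PosSeries

variable {R : Type*} [CommRing R]

lemma isUnit_one_sub_of_constantCoeff_eq_zero {h : R⟦X⟧} (hh : constantCoeff h = 0) :
    IsUnit (1 - h) := by
  simp [isUnit_iff_constantCoeff, hh]

/-- The generating series `∑_{n ≥ 1} u n Xⁿ`; the value `u 0` is ignored. -/
noncomputable def posSeries (u : ℕ → R) : R⟦X⟧ := X * PowerSeries.mk fun n => u (n + 1)

@[simp]
lemma constantCoeff_posSeries (u : ℕ → R) : constantCoeff (posSeries u) = 0 := by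
  simp [posSeries]

@[simp]
lemma coeff_posSeries_succ (u : ℕ → R) (n : ℕ) : coeff (n + 1) (posSeries u) = u (n + 1) := by
  simp [posSeries, coeff_succ_X_mul]

lemma coeff_posSeries (u : ℕ → R) {M : ℕ} (hM : 1 ≤ M) : coeff M (posSeries u) = u M := by
  obtain ⟨m, rfl⟩ := Nat.exists_eq_add_of_le' hM
  exact coeff_posSeries_succ u m

lemma posSeries_eq_zero {u : ℕ → R} (hu : ∀ n, 1 ≤ n → u n = 0) : posSeries u = 0 := by
  ext n
  rcases n with _ | n
  · simp
  · rw [coeff_posSeries_succ, hu _ (by omega), map_zero]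

lemma coeff_one_posSeries_add_C_mul_X (u : ℕ → R) (p : R) :
    coeff 1 (posSeries u + C p * X) = u 1 + p := by
  rw [map_add, coeff_posSeries u le_rfl, coeff_C_mul, coeff_one_X, mul_one]

lemma coeff_posSeries_add_C_mul_X (u : ℕ → R) (p : R) {M : ℕ} (hM : 2 ≤ M) :
    coeff M (posSeries u + C p * X) = u M := by
  rw [map_add, coeff_posSeries u (by omega), coeff_C_mul, coeff_X, if_neg (by omega), mul_zero,
    add_zero]

lemma coeff_X_mul_derivative (f : R⟦X⟧) (M : ℕ) : coeff M (X * d⁄dX R f) = M * coeff M f := by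
  rcases M with _ | m
  · simp
  · rw [coeff_succ_X_mul, coeff_derivative, Nat.cast_succ, mul_comm]

lemma coeff_posSeries_mul_posSeries (u v : ℕ → R) (M : ℕ) :
    coeff M (posSeries u * posSeries v) = ∑ k ∈ Finset.Icc 1 (M - 1), u k * v (M - k) := by
  have hsubset : Finset.Icc 1 (M - 1) ⊆ Finset.range M.succ := fun k hk => by
    simp only [Finset.mem_Icc, Finset.mem_range] at hk ⊢
    omega
  rw [coeff_mul, Finset.Nat.sum_antidiagonal_eq_sum_range_succ
    (fun i j => coeff i (posSeries u) * coeff j (posSeries v)), ← Finset.sum_subset hsubset]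
  · refine Finset.sum_congr rfl fun k hk => ?_
    rw [Finset.mem_Icc] at hk
    rw [coeff_posSeries u hk.1, coeff_posSeries v (by omega)]
  · intro k hk hk'
    simp only [Finset.mem_Icc, Finset.mem_range] at hk hk'
    obtain rfl | rfl : k = 0 ∨ k = M := by omega
    all_goals simp

lemma posSeries_mul_one_sub_eq_of_recurrence {u v : ℕ → R} {p : R} {f : R⟦X⟧}
    (hf : constantCoeff f = 0) (hv₁ : v 1 = coeff 1 f)
    (hv : ∀ M, 2 ≤ M → v M = coeff M f + (u 1 + p) * v (M - 1)
      + ∑ k ∈ Finset.Icc 2 (M - 1), u k * v (M - k)) :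
    posSeries v * (1 - (posSeries u + C p * X)) = f := by
  suffices posSeries v = f + posSeries u * posSeries v + C p * (X * posSeries v) by
    linear_combination this
  ext M
  rw [map_add, map_add, coeff_posSeries_mul_posSeries, coeff_C_mul]
  match M with
  | 0 => simp [hf]
  | 1 => simp [hv₁, coeff_succ_X_mul]
  | m + 2 =>
    rw [coeff_posSeries_succ, hv _ (by omega), coeff_succ_X_mul, coeff_posSeries_succ,
      ← Finset.add_sum_Ioc_eq_sum_Icc (show 1 ≤ m + 2 - 1 by omega),
      ← Finset.Icc_add_one_left_eq_Ioc]
    simp only [Nat.reduceAdd, Nat.add_succ_sub_one]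
    ring

lemma posSeries_mul_one_sub_eq_C_mul {u v : ℕ → R} {p s F : R} (hs : s = u 1 + p)
    (hv₁ : v 1 = F * s)
    (hv : ∀ M, 2 ≤ M → v M = F * u M + s * v (M - 1)
      + ∑ k ∈ Finset.Icc 2 (M - 1), u k * v (M - k)) :
    posSeries v * (1 - (posSeries u + C p * X)) = C F * (posSeries u + C p * X) := by
  refine posSeries_mul_one_sub_eq_of_recurrence (by simp) ?_ fun M hM => ?_
  · rw [coeff_C_mul, coeff_one_posSeries_add_C_mul_X, ← hs, hv₁]
  · rw [coeff_C_mul, coeff_posSeries_add_C_mul_X u p hM, ← hs, hv M hM]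

lemma posSeries_mul_one_sub_eq_X_mul_derivative {u v : ℕ → R} {p : R} (hv₁ : v 1 = u 1 + p)
    (hv : ∀ M, 2 ≤ M → v M = M * u M + v 1 * v (M - 1)
      + ∑ k ∈ Finset.Icc 2 (M - 1), u k * v (M - k)) :
    posSeries v * (1 - (posSeries u + C p * X)) = X * d⁄dX R (posSeries u + C p * X) := by
  refine posSeries_mul_one_sub_eq_of_recurrence (by simp) ?_ fun M hM => ?_
  · rw [coeff_X_mul_derivative, coeff_one_posSeries_add_C_mul_X, Nat.cast_one, one_mul, hv₁]
  · rw [coeff_X_mul_derivative, coeff_posSeries_add_C_mul_X u p hM, ← hv₁, hv M hM]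

end PosSeries

section Bidiagonal

variable {R : Type*} [CommRing R] {N : ℕ}

/-- The `N × N` upper bidiagonal matrix with diagonal `a` and superdiagonal `b`,
both given as sequences of which only the first `N`, respectively `N - 1`, terms occur. -/
def upperBidiag (N : ℕ) (a b : ℕ → R) : Matrix (Fin N) (Fin N) R :=
  of fun i j => if (j : ℕ) = i then a i else if (j : ℕ) = i + 1 then b i else 0

/-- The `N × N` tridiagonal matrix with diagonal `x`, superdiagonal `u` and subdiagonal `l`,
given as sequences in the manner of `upperBidiag`. -/
def tridiag (N : ℕ) (x u l : ℕ → R) : Matrix (Fin N) (Fin N) R :=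
  of fun i j => if (j : ℕ) = i then x i else if (j : ℕ) = i + 1 then u i
    else if (i : ℕ) = j + 1 then l j else 0

lemma upperBidiag_map {S : Type*} [CommRing S] (f : R →+* S) (a b : ℕ → R) :
    (upperBidiag N a b).map f = upperBidiag N (fun i => f (a i)) (fun i => f (b i)) := by
  ext i j
  simp only [upperBidiag, map_apply, of_apply, apply_ite f, map_zero]

lemma det_upperBidiag (a b : ℕ → R) : (upperBidiag N a b).det = ∏ i ∈ Finset.range N, a i := by
  have htri : (upperBidiag N a b).IsUpperTriangular := by
    intro i j (hji : (j : ℕ) < i)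
    simp only [upperBidiag, of_apply]
    rw [if_neg (by omega), if_neg (by omega)]
  rw [det_of_isUpperTriangular htri, ← Fin.prod_univ_eq_prod_range]
  simp [upperBidiag]

lemma upperBidiag_mul_apply (a b : ℕ → R) (A : Matrix (Fin N) (Fin N) R) (i j : Fin N) :
    (upperBidiag N a b * A) i j =
      a i * A i j + if h : (i : ℕ) + 1 < N then b i * A ⟨i + 1, h⟩ j else 0 := by
  have hentry : ∀ k : Fin N, upperBidiag N a b i k * A k j =
      (if k = i then a i * A k j else 0) + if (k : ℕ) = i + 1 then b i * A k j else 0 := by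
    intro k
    simp only [upperBidiag, of_apply, Fin.ext_iff]
    split_ifs <;> first | omega | simp
  rw [mul_apply, Finset.sum_congr rfl fun k _ => hentry k, Finset.sum_add_distrib,
    Finset.sum_ite_eq', if_pos (Finset.mem_univ i)]
  congr 1
  split_ifs with h
  · simpa [Fin.ext_iff] using
      Finset.sum_ite_eq' Finset.univ (⟨i + 1, h⟩ : Fin N) fun k => b i * A k j
  · exact Finset.sum_eq_zero fun k _ => if_neg (by omega)

lemma upperBidiag_mul_transpose (a b c d : ℕ → R) :
    upperBidiag N a b * (upperBidiag N c d)ᵀ =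
      tridiag N (fun i => a i * c i + if i + 1 < N then b i * d i else 0)
        (fun i => b i * c (i + 1)) (fun i => a (i + 1) * d i) := by
  ext i j
  rw [upperBidiag_mul_apply]
  simp only [upperBidiag, tridiag, transpose_apply, of_apply]
  split_ifs <;> grind

lemma tridiag_sub_smul_one (x u l : ℕ → R) (t : R) :
    tridiag N x u l - t • 1 = tridiag N (fun i => x i - t) u l := by
  ext i j
  simp only [tridiag, Matrix.sub_apply, Matrix.smul_apply, of_apply, one_apply, Fin.ext_iff,
    smul_eq_mul]
  split_ifs <;> first | omega | simp

lemma det_tridiag_eq_prod {x u l δ : ℕ → R} (hlast : ∀ i, i + 1 = N → x i = δ i)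
    (hunit : ∀ i, i + 1 < N → IsUnit (δ (i + 1)))
    (hrec : ∀ i, i + 1 < N → (x i - δ i) * δ (i + 1) = u i * l i) :
    (tridiag N x u l).det = ∏ i ∈ Finset.range N, δ i := by
  choose! w hw using fun i hi => (hunit i hi).exists_left_inv
  have hfactor : tridiag N x u l =
      upperBidiag N (fun _ => 1) (fun i => u i * w i) * (upperBidiag N δ l)ᵀ := by
    rw [upperBidiag_mul_transpose]
    ext i j
    simp only [tridiag, of_apply]
    split_ifs with h1 h2 h3
    · linear_combination w i * hrec i h2 - (x i - δ i) * hw i h2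
    · simp [hlast i (by omega)]
    · linear_combination -u i * hw i (by omega)
    · simp
    · rfl
  rw [hfactor, det_mul, det_transpose, det_upperBidiag, det_upperBidiag, Finset.prod_const_one,
    one_mul]

end Bidiagonal

section TraceGeneratingFunction

variable {R n : Type*} [CommRing R] [Fintype n] [DecidableEq n]

/-- The resolvent `(1 - X A)⁻¹ = ∑ Aᵏ Xᵏ` of `A`, encoded as a matrix of power series. -/
noncomputable def resolventSeries (A : Matrix n n R) : Matrix n n R⟦X⟧ :=
  of fun i j => PowerSeries.mk fun k => (A ^ k) i j

lemma one_sub_X_smul_mul_resolventSeries (A : Matrix n n R) :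
    (1 - (X : R⟦X⟧) • A.map C) * resolventSeries A = 1 := by
  rw [sub_mul, one_mul, smul_mul, sub_eq_iff_eq_add]
  ext i j k
  rw [Matrix.add_apply, Matrix.smul_apply, mul_apply, map_add, smul_eq_mul]
  rcases k with _ | k
  · simp [resolventSeries, one_apply, apply_ite constantCoeff]
  · simp [resolventSeries, one_apply, apply_ite (coeff (k + 1)), coeff_succ_X_mul, coeff_C_mul,
      pow_succ', mul_apply, coeff_one]

lemma X_mul_derivative_det_one_sub_X_smul (A : Matrix n n R) :
    X * d⁄dX R (1 - (X : R⟦X⟧) • A.map C).det =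
      -posSeries (fun k => (A ^ k).trace) * (1 - (X : R⟦X⟧) • A.map C).det := by
  set M := 1 - (X : R⟦X⟧) • A.map C with hM
  have hadj : M.adjugate = M.det • resolventSeries A := by
    rw [← Matrix.mul_one M.adjugate, ← one_sub_X_smul_mul_resolventSeries A, ← Matrix.mul_assoc,
      adjugate_mul, smul_mul, Matrix.one_mul]
  have hderiv : M.map (d⁄dX R) = -A.map C := by
    ext1 i j
    simp [hM, one_apply, apply_ite]
  have htrace : X * (resolventSeries A * A.map C).trace = posSeries fun k => (A ^ k).trace := by
    ext k
    rcases k with _ | k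
    · simp
    · simp [coeff_succ_X_mul, trace, mul_apply, resolventSeries, pow_succ]
  rw [derivation_det, hadj, hderiv, smul_mul, mul_neg, trace_smul, trace_neg, ← htrace,
    smul_eq_mul]
  ring

lemma posSeries_trace_pow_eq_sum {ι : Type*} {s : Finset ι} {A : Matrix n n R}
    {h Γ : ι → R⟦X⟧} (hh : ∀ i ∈ s, constantCoeff (h i) = 0)
    (hΓ : ∀ i ∈ s, Γ i * (1 - h i) = X * d⁄dX R (h i))
    (hdet : (1 - (X : R⟦X⟧) • A.map C).det = ∏ i ∈ s, (1 - h i)) :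
    posSeries (fun k => (A ^ k).trace) = ∑ i ∈ s, Γ i := by
  have hprod : X * d⁄dX R (∏ i ∈ s, (1 - h i)) = (∑ i ∈ s, -Γ i) * ∏ i ∈ s, (1 - h i) := by
    refine derivation_prod_of_forall_eq_mul ((X : R⟦X⟧) • d⁄dX R) s _ _ fun i hi => ?_
    simp [hΓ i hi]
  have hunit : IsUnit (∏ i ∈ s, (1 - h i)) :=
    IsUnit.prod_iff.2 fun i hi => isUnit_one_sub_of_constantCoeff_eq_zero (hh i hi)
  have hlog := X_mul_derivative_det_one_sub_X_smul A
  rw [hdet, hprod, hunit.mul_left_inj, Finset.sum_neg_distrib] at hlog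
  exact (neg_injective hlog).symm

end TraceGeneratingFunction

lemma det_mul_det_one_sub_smul_mul_det {S n : Type*} [CommRing S] [Fintype n] [DecidableEq n]
    {U K L : Matrix n n S} (h : U * K * L = 1) (t : S) :
    U.det * (1 - t • K).det * L.det = (U * L - t • 1).det := by
  rw [← det_mul, ← det_mul, mul_sub, sub_mul, Matrix.mul_one, Matrix.mul_smul, smul_mul, h]

section InverseProduct

variable {R : Type*} [CommRing R] {N : ℕ} {a b c d p F : ℕ → R}

lemma isUnit_det_upperBidiag (ha : ∀ i < N, IsUnit (a i)) :
    IsUnit (upperBidiag N a b).det := by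
  rw [det_upperBidiag]
  exact IsUnit.prod_iff.2 fun i hi => ha i (Finset.mem_range.1 hi)

lemma mul_inv_mul_mul_eq_one {n : Type*} [Fintype n] [DecidableEq n] {U L : Matrix n n R}
    (hU : IsUnit U.det) (hL : IsUnit L.det) : U * (L * U)⁻¹ * L = 1 := by
  rw [Matrix.mul_inv_rev, mul_nonsing_inv_cancel_left _ _ hU, nonsing_inv_mul _ hL]

lemma det_map_C_mul_sub_X_smul_one {h : ℕ → R⟦X⟧}
    (hp : ∀ i < N, p i * (a i * c i) = 1)
    (hF : ∀ i, i + 1 < N → F i * (a i * c i) = b i * d i)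
    (hh : ∀ i < N, constantCoeff (h i) = 0)
    (hlast : ∀ i, i + 1 = N → h i = C (p i) * X)
    (hrec : ∀ i, i + 1 < N → (h i - C (p i) * X) * (1 - h (i + 1)) = C (F i) * h (i + 1)) :
    ((upperBidiag N a b).map C * ((upperBidiag N c d).map C)ᵀ - (X : R⟦X⟧) • 1).det =
      ∏ i ∈ Finset.range N, C (a i * c i) * (1 - h i) := by
  have hCp : ∀ i < N, (C (p i) * (C (a i) * C (c i)) : R⟦X⟧) = 1 := fun i hi => by
    simp only [← map_mul, hp i hi, map_one]
  have hCF : ∀ i, i + 1 < N → (C (F i) * (C (a i) * C (c i)) : R⟦X⟧) = C (b i) * C (d i) :=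
    fun i hi => by simp only [← map_mul, hF i hi]
  rw [upperBidiag_map, upperBidiag_map, upperBidiag_mul_transpose, tridiag_sub_smul_one]
  apply det_tridiag_eq_prod
  · intro i hi
    rw [if_neg (by omega), hlast i hi, map_mul]
    linear_combination X * hCp i (by omega)
  · intro i hi
    exact ((IsUnit.of_mul_eq_one_right _ (hp _ hi)).map C).mul
      (isUnit_one_sub_of_constantCoeff_eq_zero (hh _ hi))
  · intro i hi
    rw [if_pos hi, map_mul, map_mul]
    linear_combination C (a (i + 1)) * C (c (i + 1)) * (C (a i) * C (c i) * hrec i hi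
      + h (i + 1) * hCF i hi + X * (1 - h (i + 1)) * hCp i (by omega))

lemma det_one_sub_X_smul_inv_eq_prod {h : ℕ → R⟦X⟧}
    (hp : ∀ i < N, p i * (a i * c i) = 1)
    (hF : ∀ i, i + 1 < N → F i * (a i * c i) = b i * d i)
    (hh : ∀ i < N, constantCoeff (h i) = 0)
    (hlast : ∀ i, i + 1 = N → h i = C (p i) * X)
    (hrec : ∀ i, i + 1 < N → (h i - C (p i) * X) * (1 - h (i + 1)) = C (F i) * h (i + 1)) :
    (1 - (X : R⟦X⟧) • ((upperBidiag N c d)ᵀ * upperBidiag N a b)⁻¹.map C).det =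
      ∏ i ∈ Finset.range N, (1 - h i) := by
  set U := upperBidiag N a b
  set L := (upperBidiag N c d)ᵀ
  have hac : ∀ i < N, IsUnit (a i * c i) := fun i hi => .of_mul_eq_one_right _ (hp i hi)
  have hUKL : U.map C * (L * U)⁻¹.map C * L.map C = (1 : Matrix (Fin N) (Fin N) R⟦X⟧) := by
    have hU : IsUnit U.det :=
      isUnit_det_upperBidiag fun i hi => isUnit_of_mul_isUnit_left (hac i hi)
    have hL : IsUnit L.det := by
      rw [det_transpose]
      exact isUnit_det_upperBidiag fun i hi => isUnit_of_mul_isUnit_right (hac i hi)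
    rw [← Matrix.map_mul, ← Matrix.map_mul, mul_inv_mul_mul_eq_one hU hL,
      Matrix.map_one _ (map_zero C) (map_one C)]
  have hdet := det_mul_det_one_sub_smul_mul_det hUKL X
  rw [show L.map C = ((upperBidiag N c d).map C)ᵀ from rfl,
    det_map_C_mul_sub_X_smul_one hp hF hh hlast hrec, det_transpose,
    upperBidiag_map, upperBidiag_map, det_upperBidiag, det_upperBidiag, mul_right_comm,
    ← Finset.prod_mul_distrib, Finset.prod_mul_distrib (f := fun i => C (a i * c i))] at hdet
  simp only [← map_mul] at hdet
  exact (IsUnit.prod_iff.2 fun i hi => (hac i (Finset.mem_range.1 hi)).map C).mul_left_cancel hdet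

end InverseProduct

theorem stmt_11_general {R : Type*} [CommRing R] {N : ℕ} {a b c d p F : ℕ → R}
    (hp : ∀ i < N, p i * (a i * c i) = 1)
    (hF : ∀ i, i + 1 < N → F i * (a i * c i) = b i * d i)
    {g G : ℕ → ℕ → R}
    (hg1N : g 1 (N - 1) = 0)
    (hG1N : G 1 (N - 1) = p (N - 1))
    (hg1i : ∀ i, i + 1 < N → g 1 i = F i * G 1 (i + 1))
    (hG1i : ∀ i, i + 1 < N → G 1 i = g 1 i + p i)
    (hgMN : ∀ M, 2 ≤ M → g M (N - 1) = 0)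
    (hgMi : ∀ M, 2 ≤ M → ∀ i, i + 1 < N →
      g M i = F i * g M (i + 1) + G 1 (i + 1) * g (M - 1) i
        + ∑ k ∈ Finset.Icc 2 (M - 1), g k (i + 1) * g (M - k) i)
    (hGM : ∀ M, 2 ≤ M → ∀ i, i < N →
      G M i = M * g M i + G 1 i * G (M - 1) i
        + ∑ k ∈ Finset.Icc 2 (M - 1), g k i * G (M - k) i)
    {M : ℕ} (hM : 1 ≤ M) :
    (((upperBidiag N c d)ᵀ * upperBidiag N a b)⁻¹ ^ M).trace = ∑ i ∈ Finset.range N, G M i := by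
  have hG1 : ∀ i < N, G 1 i = g 1 i + p i := by
    intro i hi
    obtain hi | rfl : i + 1 < N ∨ i = N - 1 := by omega
    · exact hG1i i hi
    · rw [hG1N, hg1N, zero_add]
  let h : ℕ → R⟦X⟧ := fun i => posSeries (g · i) + C (p i) * X
  have hh : ∀ i, constantCoeff (h i) = 0 := fun i => by simp [h]
  have hlast : ∀ i, i + 1 = N → h i = C (p i) * X := by
    rintro i rfl
    have hg : ∀ M, 1 ≤ M → g M i = 0 := fun M hM =>
      hM.eq_or_lt.elim (fun h1 => h1 ▸ hg1N) (hgMN M)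
    simp only [h, posSeries_eq_zero hg, zero_add]
  have hrec : ∀ i, i + 1 < N → (h i - C (p i) * X) * (1 - h (i + 1)) = C (F i) * h (i + 1) := by
    intro i hi
    rw [add_sub_cancel_right]
    exact posSeries_mul_one_sub_eq_C_mul (hG1 _ hi) (hg1i i hi) fun M hM => hgMi M hM i hi
  have hΓ : ∀ i ∈ Finset.range N, posSeries (G · i) * (1 - h i) = X * d⁄dX R (h i) := fun i hi =>
    have hi := Finset.mem_range.1 hi
    posSeries_mul_one_sub_eq_X_mul_derivative (hG1 i hi) fun M hM => hGM M hM i hi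
  have htrace := congrArg (coeff M) <| posSeries_trace_pow_eq_sum (fun i _ => hh i) hΓ
    (det_one_sub_X_smul_inv_eq_prod hp hF (fun i _ => hh i) hlast hrec)
  simpa only [map_sum, coeff_posSeries _ hM] using htrace

end

/-- the new subtraction-free formula `J_M(B) = Σ_i G_i^{(M)}`, where
`J_M(B) = Tr((BᵀB)^{-M})`. Indices are 0-based: the paper's 1-based `g_i^{(M)}` is
`g M (i-1)`, `G_i^{(M)}` is `G M (i-1)`; `B̌_i = 1/q_i` is `1 / q (i-1)`;
`F_i = e_i/q_i` is `e (i-1) / q (i-1)`. -/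
theorem stmt_11 (N : ℕ) (hN : 0 < N) (q e : ℕ → ℝ)
    (hq : ∀ i, i < N → 0 < q i) (he : ∀ i, i + 1 < N → 0 < e i)
    (B : Matrix (Fin N) (Fin N) ℝ)
    (hB : ∀ i j : Fin N, B i j =
      if (j : ℕ) = (i : ℕ) then Real.sqrt (q i)
      else if (j : ℕ) = (i : ℕ) + 1 then Real.sqrt (e i) else 0)
    (g G : ℕ → ℕ → ℝ)
    (hg1N : g 1 (N - 1) = 0)
    (hG1N : G 1 (N - 1) = 1 / q (N - 1))
    (hg1i : ∀ i, i + 1 < N → g 1 i = e i / q i * G 1 (i + 1))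
    (hG1i : ∀ i, i + 1 < N → G 1 i = g 1 i + 1 / q i)
    (hgMN : ∀ M, 2 ≤ M → g M (N - 1) = 0)
    (hgMi : ∀ M, 2 ≤ M → ∀ i, i + 1 < N →
      g M i = e i / q i * g M (i + 1) + G 1 (i + 1) * g (M - 1) i
        + ∑ k ∈ Finset.Icc 2 (M - 1), g k (i + 1) * g (M - k) i)
    (hGM : ∀ M, 2 ≤ M → ∀ i, i < N →
      G M i = M * g M i + G 1 i * G (M - 1) i
        + ∑ k ∈ Finset.Icc 2 (M - 1), g k i * G (M - k) i) :
    ∀ M, 1 ≤ M →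
      Matrix.trace ((Bᵀ * B)⁻¹ ^ M) = ∑ i ∈ Finset.range N, G M i := by
  have hBbidiag : B = upperBidiag N (fun i => √(q i)) (fun i => √(e i)) := ext hB
  rw [hBbidiag]
  refine fun M hM => stmt_11_general (p := fun i => 1 / q i) (F := fun i => e i / q i)
    (fun i hi => ?_) (fun i hi => ?_) hg1N hG1N hg1i hG1i hgMN hgMi hGM hM
  · rw [Real.mul_self_sqrt (hq i hi).le, one_div_mul_cancel (hq i hi).ne']
  · have hqi := hq i (by omega)
    rw [Real.mul_self_sqrt hqi.le, Real.mul_self_sqrt (he i hi).le, div_mul_cancel₀ _ hqi.ne']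
end

section
/- Let W = (BB^⊤)^{−1} with entries W_{i,j}. If 1 ≤ j < i ≤ N and 1 ≤ k < i ≤ N, then W_{i,j}·W_{k,i} = F̃_i·W_{i−1,j}·W_{k,i−1} and W_{j,i−1}·W_{k,i} = W_{j,i}·W_{k,i−1}. -/
open Matrix

/-!
Multiplying `W = (BBᵀ)⁻¹` by `Bᵀ` on the left gives `Bᵀ W = B⁻¹`, which is upper triangular because
`B` is. As column `i` of the bidiagonal matrix `B` is supported on `{i - 1, i}`, the vanishing of
the entry `(i, m)` of `Bᵀ W` for `m < i` reads `B_{i,i} W_{i,m} + B_{i-1,i} W_{i-1,m} = 0`. Hence to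
the left of the diagonal, row `i` of `W` is `-B_{i-1,i} / B_{i,i}` times row `i - 1`; by symmetry
the same holds for columns, and both product identities follow by substitution.
-/

/-- A square matrix, indexed by a linear order, whose nonzero entries lie on the diagonal or on the
superdiagonal. The superdiagonal positions are the pairs `(i, j)` with `i ⋖ j`, so that there is no
index arithmetic. -/
def IsUpperBidiagonal {n R : Type*} [LinearOrder n] [Zero R] (B : Matrix n n R) : Prop :=
  ∀ ⦃i j : n⦄, i ≠ j → ¬ i ⋖ j → B i j = 0

namespace IsUpperBidiagonal

section Basic

variable {n R : Type*} [LinearOrder n]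

theorem of_apply_eq_ite [Zero R] {N : ℕ} {B : Matrix (Fin N) (Fin N) R} {d s : Fin N → R}
    (hB : ∀ i j : Fin N, B i j =
      if (j : ℕ) = (i : ℕ) then d i else if (j : ℕ) = (i : ℕ) + 1 then s i else 0) :
    IsUpperBidiagonal B := by
  intro i j hne hcov
  rw [Fin.covBy_iff, Nat.covBy_iff_add_one_eq] at hcov
  rw [hB, if_neg (Fin.val_ne_of_ne hne.symm), if_neg (Ne.symm hcov)]

theorem isUpperTriangular [Zero R] {B : Matrix n n R} (hB : IsUpperBidiagonal B) :
    B.IsUpperTriangular :=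
  fun _ _ hlt ↦ hB (ne_of_gt hlt) fun hcov ↦ hcov.lt.asymm hlt

theorem transpose_mul_apply [Fintype n] [NonUnitalNonAssocSemiring R] {m : Type*}
    {B : Matrix n n R} (hB : IsUpperBidiagonal B) (A : Matrix n m R) {p i : n} (hpi : p ⋖ i)
    (j : m) : (Bᵀ * A) i j = B i i * A i j + B p i * A p j := by
  rw [mul_apply]
  refine Fintype.sum_eq_add i p hpi.ne' fun c hc ↦ ?_
  rw [transpose_apply, hB hc.1 fun hci ↦ hc.2 (hci.unique_left hpi), zero_mul]

end Basic

section CommRing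

variable {n R : Type*} [LinearOrder n] [Fintype n] [CommRing R] {B : Matrix n n R}

theorem isUnit_det (hB : IsUpperBidiagonal B) (hdiag : ∀ i, IsUnit (B i i)) : IsUnit B.det := by
  rw [det_of_isUpperTriangular hB.isUpperTriangular, IsUnit.prod_univ_iff]
  exact hdiag

theorem diag_mul_inv_apply_add_eq_zero (hB : IsUpperBidiagonal B) (hdiag : ∀ i, IsUnit (B i i))
    {p i m : n} (hpi : p ⋖ i) (hmi : m < i) :
    B i i * (B * Bᵀ)⁻¹ i m + B p i * (B * Bᵀ)⁻¹ p m = 0 := by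
  have hdet : IsUnit B.det := hB.isUnit_det hdiag
  have hmul : Bᵀ * (B * Bᵀ)⁻¹ = B⁻¹ := by
    rw [Matrix.mul_inv_rev, mul_nonsing_inv_cancel_left _ _ (isUnit_det_transpose B hdet)]
  have htri : B⁻¹.IsUpperTriangular :=
    letI := invertibleOfIsUnitDet B hdet
    blockTriangular_inv_of_blockTriangular hB.isUpperTriangular
  rw [← hB.transpose_mul_apply _ hpi, hmul]
  exact htri hmi

end CommRing

section Field

variable {n K : Type*} [LinearOrder n] [Fintype n] [Field K] {B : Matrix n n K}

theorem inv_apply_eq_neg_div_mul_row (hB : IsUpperBidiagonal B) (hdiag : ∀ i, B i i ≠ 0)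
    {p i m : n} (hpi : p ⋖ i) (hmi : m < i) :
    (B * Bᵀ)⁻¹ i m = -(B p i / B i i) * (B * Bᵀ)⁻¹ p m := by
  have hrec := hB.diag_mul_inv_apply_add_eq_zero (fun a ↦ (hdiag a).isUnit) hpi hmi
  have hii := hdiag i
  field_simp
  linear_combination hrec

theorem inv_apply_eq_neg_div_mul_col (hB : IsUpperBidiagonal B) (hdiag : ∀ i, B i i ≠ 0)
    {p i m : n} (hpi : p ⋖ i) (hmi : m < i) :
    (B * Bᵀ)⁻¹ m i = -(B p i / B i i) * (B * Bᵀ)⁻¹ m p := by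
  have hsymm : (B * Bᵀ)⁻¹.IsSymm := by
    rw [IsSymm, transpose_nonsing_inv, isSymm_mul_transpose_self]
  rw [← hsymm.apply, hB.inv_apply_eq_neg_div_mul_row hdiag hpi hmi, hsymm.apply]

end Field

end IsUpperBidiagonal

theorem stmt_12_general {n K : Type*} [LinearOrder n] [Fintype n] [Field K]
    {B W : Matrix n n K} (hB : IsUpperBidiagonal B) (hdiag : ∀ i, B i i ≠ 0)
    (hW : W = (B * Bᵀ)⁻¹) {p i j k : n} (hpi : p ⋖ i) (hji : j < i) (hki : k < i) :
    W i j * W k i = (B p i / B i i) ^ 2 * W p j * W k p ∧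
      W j p * W k i = W j i * W k p := by
  subst hW
  rw [hB.inv_apply_eq_neg_div_mul_row hdiag hpi hji, hB.inv_apply_eq_neg_div_mul_col hdiag hpi hki,
    hB.inv_apply_eq_neg_div_mul_col hdiag hpi hji]
  constructor <;> ring

/-- the two product identities for entries of `W = (BBᵀ)⁻¹`:
if `j < i` and `k < i` then `W_{i,j}·W_{k,i} = F̃_i·W_{i-1,j}·W_{k,i-1}` and
`W_{j,i-1}·W_{k,i} = W_{j,i}·W_{k,i-1}`. Indices are 0-based: the paper's
`F̃_i = e_{i-1}/q_i` is `e (i-1) / q i` at the 0-based index `i`. -/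
theorem stmt_12 (N : ℕ) (hN : 0 < N) (q e : ℕ → ℝ)
    (hq : ∀ i, i < N → 0 < q i) (he : ∀ i, i + 1 < N → 0 < e i)
    (B : Matrix (Fin N) (Fin N) ℝ)
    (hB : ∀ i j : Fin N, B i j =
      if (j : ℕ) = (i : ℕ) then Real.sqrt (q i)
      else if (j : ℕ) = (i : ℕ) + 1 then Real.sqrt (e i) else 0)
    (W : Matrix (Fin N) (Fin N) ℝ) (hW : W = (B * Bᵀ)⁻¹)
    (i j k : Fin N) (hji : (j : ℕ) < (i : ℕ)) (hki : (k : ℕ) < (i : ℕ)) :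
    W i j * W k i
        = e ((i : ℕ) - 1) / q i
          * W ⟨(i : ℕ) - 1, lt_of_le_of_lt (Nat.sub_le _ _) i.isLt⟩ j
          * W k ⟨(i : ℕ) - 1, lt_of_le_of_lt (Nat.sub_le _ _) i.isLt⟩ ∧
    W j ⟨(i : ℕ) - 1, lt_of_le_of_lt (Nat.sub_le _ _) i.isLt⟩ * W k i
        = W j i * W k ⟨(i : ℕ) - 1, lt_of_le_of_lt (Nat.sub_le _ _) i.isLt⟩ := by
  have hdiag : ∀ a, B a a ≠ 0 := fun a ↦ by
    rw [hB, if_pos rfl]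
    exact (Real.sqrt_pos.2 (hq a a.isLt)).ne'
  set p : Fin N := ⟨(i : ℕ) - 1, lt_of_le_of_lt (Nat.sub_le _ _) i.isLt⟩
  have hsucc : (p : ℕ) + 1 = i := Nat.sub_add_cancel (Nat.one_le_of_lt hji)
  have hpi : p ⋖ i := Fin.covBy_iff.2 (Nat.covBy_iff_add_one_eq.2 hsucc)
  have hratio : (B p i / B i i) ^ 2 = e ((i : ℕ) - 1) / q i := by
    rw [hB p i, hB i i, if_neg (by omega), if_pos hsucc.symm, if_pos rfl, div_pow,
      Real.sq_sqrt (he p (hsucc ▸ i.isLt)).le, Real.sq_sqrt (hq i i.isLt).le]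
  rw [← hratio]
  exact stmt_12_general (.of_apply_eq_ite hB) hdiag hW hpi hji hki
end
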